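/- (Discrete extended Riesz inequality.) Let d ≥ 2, m ≥ 2, let u₁, …, u_m : ℤ^d → [0,∞) be admissible, let G : [0,∞)^m → [0,∞) be supermodular with G(0,…,0) = 0, and for each pair 1 ≤ i < j ≤ m let H_{ij} : [0,∞) → [0,∞) be nonincreasing. Then Σ_{x₁,…,x_m∈ℤ^d} G(u₁(x₁), …, u_m(x_m)) ∏_{1≤i<j≤m} H_{ij}(d(x_i,x_j)) ≤ Σ_{x₁,…,x_m∈ℤ^d} G(u₁*(x₁), …, u_m*(x_m)) ∏_{1≤i<j≤m} H_{ij}(d(x_i,x_j)), where the sums are taken in [0,∞] and u_i* = R_{ℤ^d} u_i. -/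

import Mathlib

open Filter Topology

noncomputable section

abbrev ZLat (d : ℕ) := Fin d → ℤ

def stdVec (d : ℕ) (i : Fin d) : Fin d → ℝ := fun j => if j = i then 1 else 0

/-- The set of directions E⃗ ⊆ ℝ^d. -/
def Evec (d : ℕ) : Set (Fin d → ℝ) :=
  {e | (∃ i, e = stdVec d i) ∨
    (∃ i j : Fin d, i < j ∧ e = fun k => (stdVec d i k + stdVec d j k) / 2) ∨
    (∃ i j : Fin d, i < j ∧ e = fun k => (stdVec d i k - stdVec d j k) / 2)}

/-- A fixed enumeration of E⃗ (for d = 2 it is e₁, e₂, (e₁+e₂)/2, (e₁-e₂)/2). -/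
def EvecList (d : ℕ) : List (Fin d → ℝ) :=
  ((List.finRange d).map (stdVec d)) ++
  ((List.finRange d).flatMap fun i => (List.finRange d).filterMap fun j =>
    if i < j then some (fun k => (stdVec d i k + stdVec d j k) / 2) else none) ++
  ((List.finRange d).flatMap fun i => (List.finRange d).filterMap fun j =>
    if i < j then some (fun k => (stdVec d i k - stdVec d j k) / 2) else none)

/-- The n-th largest value of `u`, counted with multiplicity (1-indexed). -/
def nthLargest {α : Type*} (u : α → NNReal) (n : ℕ) : NNReal :=
  sSup {t | ∃ Ω : Finset α, Ω.card = n ∧ ∀ x ∈ Ω, t ≤ u x}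

/-- The 1-indexed position of the point with doubled coordinate `m` in the
spiral order 0, 1, −1, 2, −2, … (for even m) resp. 1/2, −1/2, 3/2, −3/2, … (for odd m). -/
def posIdx (m : ℤ) : ℕ := (if 0 < m then m else 1 - m).toNat

/-- `x` and `y` lie on a common line with direction `e`. -/
def sameLine {d : ℕ} (e : Fin d → ℝ) (x y : ZLat d) : Prop :=
  ∃ c : ℝ, (fun i => (x i : ℝ) - (y i : ℝ)) = c • e

/-- Twice the inner product ⟨e, x⟩, as an integer. -/
def pairing {d : ℕ} (e : Fin d → ℝ) (x : ZLat d) : ℤ :=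
  ⌊2 * ∑ i, e i * (x i : ℝ)⌋

/-- One-step rearrangement `R_e`. -/
def stepR {d : ℕ} (e : Fin d → ℝ) (u : ZLat d → NNReal) : ZLat d → NNReal :=
  fun x => nthLargest (fun y : {y : ZLat d // sameLine e x y} => u y.1) (posIdx (pairing e x))

/-- `R^k u` : k successive one-step rearrangements cycling through the fixed enumeration. -/
def iterR (d : ℕ) (u : ZLat d → NNReal) : ℕ → ZLat d → NNReal
  | 0 => u
  | k + 1 => stepR ((EvecList d).getD (k % (EvecList d).length) 0) (iterR d u k)

/-- The Schwarz rearrangement on ℤ^d : pointwise limit of `R^k u`. -/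
def RZd (d : ℕ) (u : ZLat d → NNReal) : ZLat d → NNReal :=
  fun x => limUnder atTop fun k => iterR d u k x

def Admissible {α : Type*} (u : α → NNReal) : Prop :=
  ∀ t : NNReal, 0 < t → {x | t < u x}.Finite

def Equimeasurable {α : Type*} (u v : α → NNReal) : Prop :=
  ∀ t : NNReal, 0 < t → Nonempty ({x | t < u x} ≃ {x | t < v x})

/-- Graph distance (ℓ¹ distance) on the lattice ℤ^d. -/
def latDist {d : ℕ} (x y : ZLat d) : ℕ := ∑ i, (x i - y i).natAbs

/-- The i-th standard basis vector of ℤ^d. -/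
def latE {d : ℕ} (i : Fin d) : ZLat d := fun j => if j = i then 1 else 0

/-- ‖∇u‖_p^p : the p-Sobolev energy, summing over each edge {x, x+e_i} once. -/
def gradEnergy (d : ℕ) (p : ℝ) (u : ZLat d → NNReal) : ENNReal :=
  ∑' (x : ZLat d) (i : Fin d), ENNReal.ofReal (|(u (x + latE i) : ℝ) - (u x : ℝ)| ^ p)

/-- ‖∇u‖_p. -/
def gradNorm (d : ℕ) (p : ℝ) (u : ZLat d → NNReal) : ENNReal :=
  gradEnergy d p u ^ (1 / p)

/-- Graph automorphism of the lattice graph ℤ^d. -/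
def IsLatAuto {d : ℕ} (σ : ZLat d ≃ ZLat d) : Prop :=
  ∀ x y : ZLat d, latDist (σ x) (σ y) = 1 ↔ latDist x y = 1

def Supermodular (G : NNReal → NNReal → NNReal) : Prop :=
  ∀ s t s₀ t₀ : NNReal, G (s + s₀) t + G s (t + t₀) ≤ G (s + s₀) (t + t₀) + G s t

def StrictlySupermodular (G : NNReal → NNReal → NNReal) : Prop :=
  ∀ s t s₀ t₀ : NNReal, 0 < s₀ → 0 < t₀ →
    G (s + s₀) t + G s (t + t₀) < G (s + s₀) (t + t₀) + G s t

/-- The values of `u` are strictly decreasing: a₁ > a₂ > a₃ > ⋯ . -/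
def StrictRan {α : Type*} (u : α → NNReal) : Prop :=
  ∀ n : ℕ, 0 < n → nthLargest u (n + 1) < nthLargest u n


/-- Supermodularity for functions of m nonnegative variables. -/
def SupermodularVec {m : ℕ} (G : (Fin m → NNReal) → NNReal) : Prop :=
  ∀ (y : Fin m → NNReal) (s t : NNReal) (i j : Fin m), i ≠ j →
    G (y + Pi.single i s) + G (y + Pi.single j t) ≤
      G (y + Pi.single i s + Pi.single j t) + G y

/-!
A two-point rearrangement with respect to a reflection of the lattice sends the larger of the two
values on each orbit `{x, r x}` to a fixed half space. Reflecting the points `x₁, …, x_m`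
independently, one gets `2 ^ m` terms of the sum. A product of kernels that only see which pairs
lie on the same side is a nonnegative combination of indicators of partitions of the indices into
blocks that are reflected together, and for each partition supermodularity is applied to one block
at a time: sorting a block replaces two vectors by their supremum and infimum.

The rearrangement along the lines of direction `e` is the result of alternating two such
reflections, `p ↦ -p` and `p ↦ 2 - p` in the line coordinate `p`. Both move mass towards a generic
point near the origin. Hence the moments of finitely supported functions about this point
decrease strictly until nothing moves, and this shows at the same time that these alternations and
the sequence `R^k u` become stationary. Truncation at a level `t > 0` commutes with rearrangement,
and by supermodularity and `G 0 = 0` it can only decrease the sum; the limit `t → 0` removes the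
assumption of finite support.
-/

/-- Supermodularity of a function on a lattice: the form of `SupermodularVec` in which the
exchange of two vectors for their supremum and infimum is a single inequality. -/
def LatticeSupermodular {L : Type*} [Lattice L] (G : L → NNReal) : Prop :=
  ∀ a b, G a + G b ≤ G (a ⊔ b) + G (a ⊓ b)

/-- The increments `a` that have at least as much effect on `G` after the increment `b` as
before it. -/
def reinforcedIncrements {M : Type*} [AddCommMonoid M] (G : M → NNReal) (b : M) :
    AddSubmonoid M where
  carrier := {a | ∀ y, G (y + a) + G (y + b) ≤ G (y + a + b) + G y}
  zero_mem' y := by simp only [add_zero, add_comm, le_refl]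
  add_mem' {a₁ a₂} h₁ h₂ y := by
    have h := add_le_add (h₁ y) (h₂ (y + a₁))
    rw [← add_assoc y]
    refine le_of_add_le_add_right (a := G (y + a₁) + G (y + a₁ + b)) ?_
    calc _ = G (y + a₁) + G (y + b) + (G (y + a₁ + a₂) + G (y + a₁ + b)) := by ring
      _ ≤ _ := h
      _ = _ := by ring

theorem mem_reinforcedIncrements_comm {M : Type*} [AddCommMonoid M] {G : M → NNReal} {a b : M} :
    a ∈ reinforcedIncrements G b ↔ b ∈ reinforcedIncrements G a :=
  forall_congr' fun y => by rw [add_comm (G (y + a)), add_right_comm y a b]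

theorem SupermodularVec.mem_reinforcedIncrements {m : ℕ} {G : (Fin m → NNReal) → NNReal}
    (hG : SupermodularVec G) {a b : Fin m → NNReal} (hab : ∀ i, a i = 0 ∨ b i = 0) :
    a ∈ reinforcedIncrements G b := by
  rw [← Finset.univ_sum_single a]
  refine sum_mem fun i _ => mem_reinforcedIncrements_comm.2 ?_
  rw [← Finset.univ_sum_single b]
  refine sum_mem fun j _ => mem_reinforcedIncrements_comm.2 ?_
  obtain rfl | hij := eq_or_ne i j
  · obtain h | h := hab i
    · simpa only [h, Pi.single_zero] using zero_mem _
    · simpa only [h, Pi.single_zero] using mem_reinforcedIncrements_comm.2 (zero_mem _)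
  · exact fun y => hG y _ _ i j hij

theorem SupermodularVec.latticeSupermodular {m : ℕ} {G : (Fin m → NNReal) → NNReal}
    (hG : SupermodularVec G) : LatticeSupermodular G := by
  intro p q
  have hdisj : ∀ i, (p - p ⊓ q) i = 0 ∨ (q - p ⊓ q) i = 0 := fun i => by
    rcases le_total (p i) (q i) with h | h <;> simp [h]
  have hp : p ⊓ q + (p - p ⊓ q) = p := add_tsub_cancel_of_le inf_le_left
  have hq : p ⊓ q + (q - p ⊓ q) = q := add_tsub_cancel_of_le inf_le_right
  have hsup : p + (q - p ⊓ q) = p ⊔ q := funext fun i => by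
    rcases le_total (p i) (q i) with h | h <;> simp [h]
  simpa only [hp, hq, hsup] using hG.mem_reinforcedIncrements hdisj (p ⊓ q)

theorem LatticeSupermodular.le_of_forall_eq_zero_or_eq {ι : Type*} {G : (ι → NNReal) → NNReal}
    (hG : LatticeSupermodular G) (hG0 : G 0 = 0) {y z : ι → NNReal}
    (h : ∀ i, z i = 0 ∨ z i = y i) : G z ≤ G y := by
  classical
  let z' : ι → NNReal := fun i => if z i = 0 then y i else 0
  have hsup : z ⊔ z' = y := funext fun i => by
    rcases h i with hi | hi <;> by_cases hz : z i = 0 <;> simp_all [z']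
  have hinf : z ⊓ z' = 0 := funext fun i => by
    by_cases hz : z i = 0 <;> simp [z', hz]
  calc G z ≤ G z + G z' := le_self_add
    _ ≤ G (z ⊔ z') + G (z ⊓ z') := hG z z'
    _ = G y := by rw [hsup, hinf, hG0, add_zero]

section Mixing

variable {ι α Q : Type*}

/-- The vector with entries from `q` where `ε` is `true` and from `p` elsewhere. -/
def mix (ε : ι → Bool) (p q : ι → α) : ι → α :=
  fun i => if ε i then q i else p i

theorem sum_le_sum_of_involutive [Fintype ι] {τ : ι → ι} (hτ : Function.Involutive τ)
    {f g : ι → NNReal} (h : ∀ x, f x + f (τ x) ≤ g x + g (τ x)) : ∑ x, f x ≤ ∑ x, g x := by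
  have two_mul_sum (f : ι → NNReal) : 2 * ∑ x, f x = ∑ x, (f x + f (τ x)) := by
    have sum_comp_eq : ∑ x, f (τ x) = ∑ x, f x := Equiv.sum_comp hτ.toPerm f
    rw [Finset.sum_add_distrib, two_mul, sum_comp_eq]
  refine le_of_mul_le_mul_left ?_ (two_pos (α := NNReal))
  rw [two_mul_sum f, two_mul_sum g]
  exact Finset.sum_le_sum fun x _ => h x

variable [Lattice α] {G : (ι → α) → NNReal}

theorem LatticeSupermodular.sum_mix_comp_le_of_sort_fiber [Fintype Q] [DecidableEq Q]
    (hG : LatticeSupermodular G) (f : ι → Q) (l : Q) {p q p' q' : ι → α}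
    (hon : ∀ i, f i = l → p' i = p i ⊔ q i ∧ q' i = p i ⊓ q i)
    (hoff : ∀ i, f i ≠ l → p' i = p i ∧ q' i = q i) :
    ∑ δ : Q → Bool, G (mix (δ ∘ f) p q) ≤ ∑ δ : Q → Bool, G (mix (δ ∘ f) p' q') := by
  let flip : (Q → Bool) → Q → Bool := fun δ => Function.update δ l (!(δ l))
  have flip_flip : Function.Involutive flip := fun δ => by simp [flip]
  have pair_le (δ : Q → Bool) (hδ : δ l = false) :
      G (mix (δ ∘ f) p q) + G (mix (flip δ ∘ f) p q) ≤
        G (mix (δ ∘ f) p' q') + G (mix (flip δ ∘ f) p' q') := by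
    have hsup : mix (δ ∘ f) p' q' = mix (δ ∘ f) p q ⊔ mix (flip δ ∘ f) p q := funext fun i => by
      by_cases hi : f i = l
      · simp [mix, flip, hi, hδ, hon i hi]
      · simp [mix, flip, hi, hoff i hi]
    have hinf : mix (flip δ ∘ f) p' q' = mix (δ ∘ f) p q ⊓ mix (flip δ ∘ f) p q :=
      funext fun i => by
        by_cases hi : f i = l
        · simp [mix, flip, hi, hδ, hon i hi]
        · simp [mix, flip, hi, hoff i hi]
    rw [hsup, hinf]
    exact hG _ _
  refine sum_le_sum_of_involutive flip_flip fun δ => ?_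
  cases hδ : δ l with
  | false => exact pair_le δ hδ
  | true =>
    have h := pair_le (flip δ) (by simp [flip, hδ])
    rwa [flip_flip, add_comm, add_comm (G (mix (flip δ ∘ f) p' q'))] at h

theorem LatticeSupermodular.sum_mix_comp_le [Fintype Q] [DecidableEq Q]
    (hG : LatticeSupermodular G) (f : ι → Q) (p q : ι → α) :
    ∑ δ : Q → Bool, G (mix (δ ∘ f) p q) ≤ ∑ δ : Q → Bool, G (mix (δ ∘ f) (p ⊔ q) (p ⊓ q)) := by
  classical
  let hi (L : Finset Q) : ι → α := fun i => if f i ∈ L then p i ⊔ q i else p i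
  let lo (L : Finset Q) : ι → α := fun i => if f i ∈ L then p i ⊓ q i else q i
  have sort_on (L : Finset Q) :
      ∑ δ : Q → Bool, G (mix (δ ∘ f) p q) ≤ ∑ δ : Q → Bool, G (mix (δ ∘ f) (hi L) (lo L)) := by
    induction L using Finset.induction_on with
    | empty => simp [hi, lo]
    | insert l L hl ih =>
      refine ih.trans (hG.sum_mix_comp_le_of_sort_fiber f l (fun i h => ?_) fun i h => ?_)
      · simp [hi, lo, h, hl]
      · simp [hi, lo, h]
  simpa [hi, lo, Pi.sup_def, Pi.inf_def] using sort_on Finset.univ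

theorem sum_filter_compatible_eq_sum_quot [Fintype ι] [DecidableEq ι] (r : ι → ι → Prop)
    [DecidableRel r] [Fintype (Quot r)]
    [DecidableEq (Quot r)] (F : (ι → Bool) → NNReal) :
    ∑ ε : ι → Bool with ∀ i j, r i j → ε i = ε j, F ε =
      ∑ δ : Quot r → Bool, F (δ ∘ Quot.mk r) := by
  symm
  refine Finset.sum_bij (fun δ _ => δ ∘ Quot.mk r) (fun δ _ => ?_) (fun δ _ δ' _ h => ?_)
    (fun ε hε => ?_) fun _ _ => rfl
  · exact Finset.mem_filter.2 ⟨Finset.mem_univ _, fun i j hij => congrArg δ (Quot.sound hij)⟩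
  · exact Quot.mk_surjective.injective_comp_right h
  · exact ⟨Quot.lift ε (Finset.mem_filter.1 hε).2, Finset.mem_univ _, rfl⟩

theorem LatticeSupermodular.sum_filter_mix_le [Fintype ι] [DecidableEq ι]
    (hG : LatticeSupermodular G) (r : ι → ι → Prop) [DecidableRel r] (p q : ι → α) :
    ∑ ε : ι → Bool with ∀ i j, r i j → ε i = ε j, G (mix ε p q) ≤
      ∑ ε : ι → Bool with ∀ i j, r i j → ε i = ε j, G (mix ε (p ⊔ q) (p ⊓ q)) := by
  classical
  have := Fintype.ofFinite (Quot r)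
  rw [sum_filter_compatible_eq_sum_quot r fun ε => G (mix ε p q),
    sum_filter_compatible_eq_sum_quot r fun ε => G (mix ε (p ⊔ q) (p ⊓ q))]
  exact hG.sum_mix_comp_le (Quot.mk r) p q

theorem prod_prod_ite_eq_sum_prod_mul_ite [Fintype ι] [DecidableEq ι] {a b : ι → ι → NNReal}
    (hab : ∀ i j, b i j ≤ a i j) (ε : ι → Bool) :
    ∏ i, ∏ j, (if ε i = ε j then a i j else b i j) =
      ∑ t : Finset (ι × ι), (∏ e ∈ t, (a e.1 e.2 - b e.1 e.2)) * (∏ e ∈ tᶜ, b e.1 e.2) *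
        if ∀ i j, (i, j) ∈ t → ε i = ε j then 1 else 0 := by
  have factor_eq (e : ι × ι) : (if ε e.1 = ε e.2 then a e.1 e.2 else b e.1 e.2) =
      (a e.1 e.2 - b e.1 e.2) * (if ε e.1 = ε e.2 then 1 else 0) + b e.1 e.2 := by
    split_ifs with h
    · rw [mul_one, tsub_add_cancel_of_le (hab _ _)]
    · rw [mul_zero, zero_add]
  rw [← Fintype.prod_prod_type' fun i j => if ε i = ε j then a i j else b i j]
  simp only [factor_eq, Fintype.prod_add, Finset.prod_mul_distrib, Finset.prod_boole,
    Prod.forall, mul_right_comm]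

theorem LatticeSupermodular.sum_mix_mul_prod_le [Fintype ι] [DecidableEq ι]
    (hG : LatticeSupermodular G) {a b : ι → ι → NNReal} (hab : ∀ i j, b i j ≤ a i j) (p q : ι → α) :
    ∑ ε : ι → Bool, G (mix ε p q) * ∏ i, ∏ j, (if ε i = ε j then a i j else b i j) ≤
      ∑ ε : ι → Bool, G (mix ε (p ⊔ q) (p ⊓ q)) *
        ∏ i, ∏ j, (if ε i = ε j then a i j else b i j) := by
  have expand (F : (ι → Bool) → NNReal) :
      ∑ ε, F ε * ∏ i, ∏ j, (if ε i = ε j then a i j else b i j) =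
        ∑ t : Finset (ι × ι), (∏ e ∈ t, (a e.1 e.2 - b e.1 e.2)) * (∏ e ∈ tᶜ, b e.1 e.2) *
          ∑ ε with ∀ i j, (i, j) ∈ t → ε i = ε j, F ε := by
    simp only [prod_prod_ite_eq_sum_prod_mul_ite hab, Finset.mul_sum, Finset.sum_filter]
    rw [Finset.sum_comm]
    refine Finset.sum_congr rfl fun t _ => Finset.sum_congr rfl fun ε _ => ?_
    split_ifs <;> ring
  rw [expand fun ε => G (mix ε p q), expand fun ε => G (mix ε (p ⊔ q) (p ⊓ q))]
  exact Finset.sum_le_sum fun t _ => mul_le_mul_right (hG.sum_filter_mix_le _ p q) _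

end Mixing

/-! ### Two-point rearrangements -/

section Energy

variable {ι X : Type*} [Fintype ι]

/-- The contribution of the tuple `x` to `energy K G u`. There is an interaction kernel `K i j` for
each ordered pair of indices; kernels equal to `1` leave a pair without interaction. -/
def energyDensity (K : ι → ι → X → X → NNReal) (G : (ι → NNReal) → NNReal) (u : ι → X → NNReal)
    (x : ι → X) : NNReal :=
  G (fun i => u i (x i)) * ∏ i, ∏ j, K i j (x i) (x j)

/-- The functional that rearrangements increase, as an extended nonnegative sum over all tuples. -/
def energy (K : ι → ι → X → X → NNReal) (G : (ι → NNReal) → NNReal) (u : ι → X → NNReal) :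
    ENNReal :=
  ∑' x : ι → X, (energyDensity K G u x : ENNReal)

end Energy

/-- An involution of `X` with a half space that it exchanges with its complement, up to the fixed
points. Such data define a two-point rearrangement, see `HalfSpaceReflection.polarize`. -/
structure HalfSpaceReflection (X : Type*) where
  toFun : X → X
  half : Set X
  involutive : Function.Involutive toFun
  mem_or_apply_mem : ∀ x, x ∈ half ∨ toFun x ∈ half
  apply_eq_of_mem : ∀ x ∈ half, toFun x ∈ half → toFun x = x

namespace HalfSpaceReflection

variable {X : Type*}

instance : CoeFun (HalfSpaceReflection X) fun _ => X → X := ⟨toFun⟩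

variable (r : HalfSpaceReflection X)

section Polarize

variable {β : Type*} [LinearOrder β] {u : X → β} {x : X}

open scoped Classical in
/-- The two-point rearrangement: of the two values of `u` on each orbit, the larger one is moved
into the half space. -/
def polarize (u : X → β) : X → β :=
  fun x => if x ∈ r.half then u x ⊔ u (r x) else u x ⊓ u (r x)

theorem polarize_of_mem (hx : x ∈ r.half) : r.polarize u x = u x ⊔ u (r x) :=
  if_pos hx

theorem polarize_of_notMem (hx : x ∉ r.half) : r.polarize u x = u x ⊓ u (r x) :=
  if_neg hx

theorem polarize_apply_of_mem (hx : x ∈ r.half) : r.polarize u (r x) = u x ⊓ u (r x) := by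
  by_cases hrx : r x ∈ r.half
  · rw [r.apply_eq_of_mem x hx hrx, r.polarize_of_mem hx, r.apply_eq_of_mem x hx hrx, sup_idem,
      inf_idem]
  · rw [r.polarize_of_notMem hrx, r.involutive x, inf_comm]

theorem polarize_eq_or (u : X → β) (x : X) :
    r.polarize u x = u x ∨ r.polarize u x = u (r x) := by
  by_cases hx : x ∈ r.half
  · rw [r.polarize_of_mem hx]
    exact max_choice _ _
  · rw [r.polarize_of_notMem hx]
    exact min_choice _ _

theorem apply_le_of_polarize_eq (h : r.polarize u = u) (hx : x ∈ r.half) : u (r x) ≤ u x := by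
  rw [← sup_eq_left, ← r.polarize_of_mem hx, h]

theorem exists_lt_apply_of_polarize_ne (h : r.polarize u ≠ u) : ∃ x ∈ r.half, u x < u (r x) := by
  contrapose! h
  ext x
  rcases r.mem_or_apply_mem x with hx | hx
  · rw [r.polarize_of_mem hx, sup_eq_left.2 (h x hx)]
  · have hle := h _ hx
    have hpol := r.polarize_apply_of_mem (u := u) hx
    rw [r.involutive x] at hle hpol
    rw [hpol, inf_eq_right.2 hle]

theorem polarize_apply_eq_iff : r.polarize u (r x) = u (r x) ↔ r.polarize u x = u x := by
  have of_mem_half {y : X} (hy : y ∈ r.half) :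
      r.polarize u (r y) = u (r y) ↔ r.polarize u y = u y := by
    rw [r.polarize_of_mem hy, r.polarize_apply_of_mem hy, sup_eq_left, inf_eq_right]
  rcases r.mem_or_apply_mem x with hx | hx
  · exact of_mem_half hx
  · simpa only [r.involutive x] using (of_mem_half hx).symm

theorem exists_perm_polarize_eq_comp (u : X → β) :
    ∃ τ : Equiv.Perm X, (∀ x, τ x = x ∨ τ x = r x) ∧ r.polarize u = u ∘ τ := by
  classical
  let τ : X → X := fun x => if r.polarize u x = u x then x else r x
  have τ_involutive : Function.Involutive τ := fun x => by
    by_cases h : r.polarize u x = u x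
    · simp [τ, h]
    · simp [τ, h, r.polarize_apply_eq_iff, r.involutive x]
  refine ⟨τ_involutive.toPerm, fun x => ite_eq_or_eq _ _ _, funext fun x => ?_⟩
  by_cases h : r.polarize u x = u x
  · simp [τ, h]
  · simpa [τ, h] using (r.polarize_eq_or u x).resolve_left h

end Polarize

section Energy

variable {ι : Type*} {u : ι → X → NNReal}

theorem mix_mix_apply (δ ε : ι → Bool) (x : ι → X) :
    mix ε (mix δ x (r ∘ x)) (r ∘ mix δ x (r ∘ x)) = mix (fun i => xor (ε i) (δ i)) x (r ∘ x) := by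
  funext i
  cases hδ : δ i <;> cases hε : ε i <;> simp [mix, hδ, hε, r.involutive _]

theorem exists_mix_mem_half (x : ι → X) :
    ∃ δ : ι → Bool, ∀ i, mix δ x (r ∘ x) i ∈ r.half := by
  classical
  refine ⟨fun i => decide (x i ∉ r.half), fun i => ?_⟩
  by_cases hx : x i ∈ r.half
  · simp [mix, hx]
  · simpa [mix, hx] using (r.mem_or_apply_mem (x i)).resolve_left hx

theorem polarize_mix_apply {x : ι → X} (hx : ∀ i, x i ∈ r.half) (ε : ι → Bool) :
    (fun i => r.polarize (u i) (mix ε x (r ∘ x) i)) =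
      mix ε ((fun i => u i (x i)) ⊔ fun i => u i (r (x i)))
        ((fun i => u i (x i)) ⊓ fun i => u i (r (x i))) := by
  funext i
  cases hε : ε i
  · simp [mix, hε, r.polarize_of_mem (hx i)]
  · simp [mix, hε, r.polarize_apply_of_mem (hx i)]

/-- The kernel `k` is invariant under the reflection and weighs two points on the same side at
least as much as the pair with one point moved to the other side. -/
structure Favors (k : X → X → NNReal) : Prop where
  apply_apply : ∀ x y, k (r x) (r y) = k x y
  apply_right_le : ∀ x ∈ r.half, ∀ y ∈ r.half, k x (r y) ≤ k x y

variable {r}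

theorem Favors.mix_apply {k : X → X → NNReal} (hk : r.Favors k) (ε : ι → Bool) (x : ι → X)
    (i j : ι) : k (mix ε x (r ∘ x) i) (mix ε x (r ∘ x) j) =
      if ε i = ε j then k (x i) (x j) else k (x i) (r (x j)) := by
  have apply_left : k (r (x i)) (x j) = k (x i) (r (x j)) := by
    rw [← hk.apply_apply, r.involutive]
  cases hi : ε i <;> cases hj : ε j <;> simp [mix, hi, hj, hk.apply_apply, apply_left]

variable [Fintype ι] {K : ι → ι → X → X → NNReal} {G : (ι → NNReal) → NNReal}

theorem sum_orbit_le_of_mem_half [DecidableEq ι] (hG : LatticeSupermodular G)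
    (hK : ∀ i j, r.Favors (K i j)) (u : ι → X → NNReal) {x : ι → X} (hx : ∀ i, x i ∈ r.half) :
    ∑ ε : ι → Bool, energyDensity K G u (mix ε x (r ∘ x)) ≤
      ∑ ε : ι → Bool, energyDensity K G (fun i => r.polarize (u i)) (mix ε x (r ∘ x)) := by
  have comp_mix (ε : ι → Bool) : (fun i => u i (mix ε x (r ∘ x) i)) =
      mix ε (fun i => u i (x i)) fun i => u i (r (x i)) :=
    funext fun i => apply_ite (u i) _ _ _
  simp only [energyDensity, comp_mix, r.polarize_mix_apply hx, (hK _ _).mix_apply]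
  exact hG.sum_mix_mul_prod_le (fun i j => (hK i j).apply_right_le _ (hx i) _ (hx j)) _ _

theorem sum_orbit_le [DecidableEq ι] (hG : LatticeSupermodular G)
    (hK : ∀ i j, r.Favors (K i j)) (u : ι → X → NNReal) (x : ι → X) :
    ∑ ε : ι → Bool, energyDensity K G u (mix ε x (r ∘ x)) ≤
      ∑ ε : ι → Bool, energyDensity K G (fun i => r.polarize (u i)) (mix ε x (r ∘ x)) := by
  obtain ⟨δ, hδ⟩ := r.exists_mix_mem_half x
  have xor_involutive : Function.Involutive fun (ε : ι → Bool) i => xor (ε i) (δ i) := fun ε =>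
    funext fun i => by simp
  have sum_xor_eq (F : (ι → Bool) → NNReal) :
      ∑ ε : ι → Bool, F (fun i => xor (ε i) (δ i)) = ∑ ε, F ε :=
    Equiv.sum_comp xor_involutive.toPerm F
  have h := sum_orbit_le_of_mem_half hG hK u hδ
  simp only [mix_mix_apply] at h
  rwa [sum_xor_eq fun ε => energyDensity K G u (mix ε x (r ∘ x)),
    sum_xor_eq fun ε => energyDensity K G (fun i => r.polarize (u i)) (mix ε x (r ∘ x))] at h

variable (r K G) in
theorem card_mul_energy [DecidableEq ι] (u : ι → X → NNReal) :
    Fintype.card (ι → Bool) * energy K G u =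
      ∑' x : ι → X,
        ((∑ ε : ι → Bool, energyDensity K G u (mix ε x (r ∘ x)) : NNReal) : ENNReal) := by
  have mix_involutive (ε : ι → Bool) : Function.Involutive fun x : ι → X => mix ε x (r ∘ x) :=
    fun x => by simp [mix_mix_apply, funext_iff, mix]
  have tsum_mix_eq (ε : ι → Bool) :
      ∑' x : ι → X, (energyDensity K G u (mix ε x (r ∘ x)) : ENNReal) = energy K G u :=
    Equiv.tsum_eq (mix_involutive ε).toPerm fun x => (energyDensity K G u x : ENNReal)
  simp only [ENNReal.ofNNReal_finsetSum]
  rw [Summable.tsum_finsetSum fun _ _ => ENNReal.summable]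
  simp only [tsum_mix_eq, Finset.sum_const, Finset.card_univ, nsmul_eq_mul]

theorem energy_le_energy_polarize (hG : LatticeSupermodular G) (hK : ∀ i j, r.Favors (K i j))
    (u : ι → X → NNReal) : energy K G u ≤ energy K G fun i => r.polarize (u i) := by
  classical
  refine (ENNReal.mul_le_mul_iff_right (a := Fintype.card (ι → Bool)) (by simp)
    (ENNReal.natCast_ne_top _)).1 ?_
  rw [card_mul_energy r, card_mul_energy r]
  exact ENNReal.tsum_le_tsum fun x => by exact_mod_cast sum_orbit_le hG hK u x

end Energy

end HalfSpaceReflection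

/-! ### Stabilization of alternating two-point rearrangements -/

section Moment

variable {X : Type*}

/-- The total weight of the mass distribution `u`. -/
def moment (w u : X → NNReal) : ENNReal :=
  ∑' x, ((u x * w x : NNReal) : ENNReal)

theorem moment_ne_top (w : X → NNReal) {u : X → NNReal} (hu : u.support.Finite) :
    moment w u ≠ ⊤ := by
  rw [moment, tsum_eq_sum (s := hu.toFinset) fun x hx => by simp_all, ← ENNReal.ofNNReal_finsetSum]
  exact ENNReal.coe_ne_top

/-- The functions with values in `V` that vanish where the weight exceeds `M`. -/
def confined (w : X → NNReal) (M : NNReal) (V : Set NNReal) : Set (X → NNReal) :=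
  {u | ∀ x, u x ∈ V ∧ (u x ≠ 0 → w x ≤ M)}

theorem finite_confined {w : X → NNReal} (hw : ∀ M, {x | w x ≤ M}.Finite) (M : NNReal)
    {V : Set NNReal} (hV : V.Finite) : (confined w M V).Finite := by
  have : Finite {x | w x ≤ M} := hw M
  refine Set.Finite.of_finite_image (f := fun u (x : {x | w x ≤ M}) => u x)
    ((Set.Finite.pi' fun _ => hV).subset ?_) fun u hu v hv huv => funext fun x => ?_
  · rintro _ ⟨u, hu, rfl⟩ x
    exact (hu x).1
  · by_cases hx : w x ≤ M
    · exact congrFun huv ⟨x, hx⟩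
    · rw [not_not.1 (mt (hu x).2 hx), not_not.1 (mt (hv x).2 hx)]

theorem exists_mem_confined (w : X → NNReal) {u : X → NNReal} (hu : u.support.Finite) :
    ∃ M V, V.Finite ∧ u ∈ confined w M V := by
  obtain ⟨M, hM⟩ := (hu.image w).bddAbove
  refine ⟨M, insert 0 (u '' u.support), (hu.image u).insert 0, fun x => ⟨?_, fun hx => ?_⟩⟩
  · by_cases hx : u x = 0
    · exact Or.inl hx
    · exact Or.inr ⟨x, hx, rfl⟩
  · exact hM ⟨x, hx, rfl⟩

/-- `v` arises from `u` by moving mass towards smaller weights. A chain of such steps that starts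
at a finitely supported function stays in a finite set and has decreasing moments, so that it must
become stationary. -/
structure Tightens (w u v : X → NNReal) : Prop where
  mem_confined : ∀ {M V}, u ∈ confined w M V → v ∈ confined w M V
  eq_or_moment_lt : v = u ∨ moment w v < moment w u

namespace Tightens

variable {w u v z : X → NNReal}

theorem refl (w u : X → NNReal) : Tightens w u u :=
  ⟨id, Or.inl rfl⟩

theorem moment_le (h : Tightens w u v) : moment w v ≤ moment w u :=
  h.eq_or_moment_lt.elim (fun h => h ▸ le_rfl) le_of_lt

theorem trans (huv : Tightens w u v) (hvz : Tightens w v z) : Tightens w u z where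
  mem_confined h := hvz.mem_confined (huv.mem_confined h)
  eq_or_moment_lt := by
    rcases hvz.eq_or_moment_lt with rfl | h
    · exact huv.eq_or_moment_lt
    · exact Or.inr (h.trans_le huv.moment_le)

theorem antisymm (huv : Tightens w u v) (hvu : Tightens w v u) : v = u :=
  huv.eq_or_moment_lt.resolve_right hvu.moment_le.not_gt

theorem support_finite (hw : ∀ M, {x | w x ≤ M}.Finite) (h : Tightens w u v)
    (hu : u.support.Finite) : v.support.Finite := by
  obtain ⟨M, V, -, hmem⟩ := exists_mem_confined w hu
  exact (hw M).subset fun x hx => (h.mem_confined hmem x).2 hx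

theorem of_succ {S : ℕ → X → NNReal} (h : ∀ k, Tightens w (S k) (S (k + 1))) {k n : ℕ}
    (hkn : k ≤ n) : Tightens w (S k) (S n) :=
  Nat.le_induction (refl w _) (fun n _ ih => ih.trans (h n)) n hkn

theorem exists_forall_ge_eq (hw : ∀ M, {x | w x ≤ M}.Finite) {S : ℕ → X → NNReal}
    (h : ∀ k, Tightens w (S k) (S (k + 1))) (h₀ : (S 0).support.Finite) :
    ∃ N, ∀ n ≥ N, S n = S N := by
  obtain ⟨M, V, hV, hmem⟩ := exists_mem_confined w h₀
  have range_finite : (Set.range S).Finite := (finite_confined hw M hV).subset <|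
    Set.range_subset_iff.2 fun n => (of_succ h n.zero_le).mem_confined hmem
  obtain ⟨_, ⟨N, rfl⟩, hN⟩ := Set.exists_min_image _ (moment w) range_finite ⟨S 0, 0, rfl⟩
  exact ⟨N, fun n hn =>
    (of_succ h hn).eq_or_moment_lt.resolve_right (hN _ ⟨n, rfl⟩).not_gt⟩

end Tightens

namespace HalfSpaceReflection

variable {r s : HalfSpaceReflection X} {w u : X → NNReal}

/-- Every point of the half space that is moved by the reflection is moved to a point of larger
weight. -/
def RaisesWeight (r : HalfSpaceReflection X) (w : X → NNReal) : Prop :=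
  ∀ x ∈ r.half, r x ≠ x → w x < w (r x)

theorem RaisesWeight.le (hr : r.RaisesWeight w) {x : X} (hx : x ∈ r.half) : w x ≤ w (r x) := by
  by_cases h : r x = x
  · rw [h]
  · exact (hr x hx h).le

variable (r) in
theorem two_mul_moment (w u : X → NNReal) :
    2 * moment w u = ∑' x, ((u x * w x + u (r x) * w (r x) : NNReal) : ENNReal) := by
  have tsum_comp_eq : ∑' x, ((u (r x) * w (r x) : NNReal) : ENNReal) = moment w u :=
    Equiv.tsum_eq r.involutive.toPerm fun x => ((u x * w x : NNReal) : ENNReal)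
  simp only [ENNReal.coe_add]
  rw [ENNReal.tsum_add, tsum_comp_eq, two_mul, moment]

theorem RaisesWeight.polarize_mul_add_le (hr : r.RaisesWeight w) (u : X → NNReal) (x : X) :
    r.polarize u x * w x + r.polarize u (r x) * w (r x) ≤ u x * w x + u (r x) * w (r x) := by
  have of_mem_half {y : X} (hy : y ∈ r.half) :
      r.polarize u y * w y + r.polarize u (r y) * w (r y) ≤ u y * w y + u (r y) * w (r y) := by
    rw [r.polarize_of_mem hy, r.polarize_apply_of_mem hy]
    rcases le_total (u (r y)) (u y) with h | h
    · rw [sup_eq_left.2 h, inf_eq_right.2 h]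
    · rw [sup_eq_right.2 h, inf_eq_left.2 h, add_comm (u y * w y)]
      simpa only [mul_comm, add_comm] using mul_add_mul_le_mul_add_mul h (hr.le hy)
  rcases r.mem_or_apply_mem x with hx | hx
  · exact of_mem_half hx
  · simpa only [r.involutive x, add_comm] using of_mem_half hx

theorem RaisesWeight.moment_polarize_lt (hr : r.RaisesWeight w) (hu : u.support.Finite)
    (h : r.polarize u ≠ u) : moment w (r.polarize u) < moment w u := by
  obtain ⟨x, hx, hlt⟩ := r.exists_lt_apply_of_polarize_ne h
  have hw : w x < w (r x) := hr x hx fun hrx => hlt.ne (by rw [hrx])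
  have strict_at_x : r.polarize u x * w x + r.polarize u (r x) * w (r x) <
      u x * w x + u (r x) * w (r x) := by
    rw [r.polarize_of_mem hx, r.polarize_apply_of_mem hx, sup_eq_right.2 hlt.le,
      inf_eq_left.2 hlt.le]
    simpa only [mul_comm, add_comm] using mul_add_mul_lt_mul_add_mul hlt hw
  refine (ENNReal.mul_lt_mul_iff_right two_ne_zero ENNReal.ofNat_ne_top).1 ?_
  rw [two_mul_moment r, two_mul_moment r]
  have le_at (y : X) :
      ((r.polarize u y * w y + r.polarize u (r y) * w (r y) : NNReal) : ENNReal) ≤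
        ((u y * w y + u (r y) * w (r y) : NNReal) : ENNReal) :=
    ENNReal.coe_le_coe.2 (hr.polarize_mul_add_le u y)
  refine ENNReal.tsum_lt_tsum (i := x) (ne_top_of_le_ne_top ?_ (ENNReal.tsum_le_tsum le_at)) le_at
    (ENNReal.coe_lt_coe.2 strict_at_x)
  rw [← two_mul_moment r]
  exact ENNReal.mul_ne_top ENNReal.ofNat_ne_top (moment_ne_top w hu)

theorem RaisesWeight.polarize_mem_confined (hr : r.RaisesWeight w) {M : NNReal} {V : Set NNReal}
    (h : u ∈ confined w M V) : r.polarize u ∈ confined w M V := by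
  refine fun x => ⟨?_, fun hpol => ?_⟩
  · rcases r.polarize_eq_or u x with hx | hx <;> rw [hx]
    exacts [(h x).1, (h (r x)).1]
  · by_cases hx : x ∈ r.half
    · rcases r.polarize_eq_or u x with hux | hux <;> rw [hux] at hpol
      exacts [(h x).2 hpol, (hr.le hx).trans ((h (r x)).2 hpol)]
    · refine (h x).2 fun hux => hpol ?_
      rw [r.polarize_of_notMem hx, hux]
      exact inf_eq_left.2 zero_le

theorem RaisesWeight.tightens_polarize (hr : r.RaisesWeight w) (hu : u.support.Finite) :
    Tightens w u (r.polarize u) where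
  mem_confined := hr.polarize_mem_confined
  eq_or_moment_lt := or_iff_not_imp_left.2 (hr.moment_polarize_lt hu)

theorem exists_iterate_polarize_eq (hw : ∀ M, {x | w x ≤ M}.Finite) (hr : r.RaisesWeight w)
    (hs : s.RaisesWeight w) (hu : u.support.Finite) :
    ∃ v, Tightens w u v ∧ r.polarize v = v ∧ s.polarize v = v ∧
      ∀ᶠ n in atTop, (s.polarize ∘ r.polarize)^[n] u = v := by
  let S (n : ℕ) : X → NNReal := (s.polarize ∘ r.polarize)^[n] u
  have S_succ (n : ℕ) : S (n + 1) = s.polarize (r.polarize (S n)) :=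
    Function.iterate_succ_apply' _ n u
  have support_r {f : X → NNReal} (hf : f.support.Finite) : (r.polarize f).support.Finite :=
    (hr.tightens_polarize hf).support_finite hw hf
  have support_S (n : ℕ) : (S n).support.Finite := by
    induction n with
    | zero => exact hu
    | succ n ih =>
      rw [S_succ]
      exact (hs.tightens_polarize (support_r ih)).support_finite hw (support_r ih)
  have tightens_r (n : ℕ) : Tightens w (S n) (r.polarize (S n)) :=
    hr.tightens_polarize (support_S n)
  have tightens_s (n : ℕ) : Tightens w (r.polarize (S n)) (S (n + 1)) := by
    rw [S_succ]
    exact hs.tightens_polarize (support_r (support_S n))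
  have tightens_S (n : ℕ) : Tightens w (S n) (S (n + 1)) := (tightens_r n).trans (tightens_s n)
  obtain ⟨N, hN⟩ := Tightens.exists_forall_ge_eq hw tightens_S hu
  have hstep : S (N + 1) = S N := hN _ N.le_succ
  have hr_fix : r.polarize (S N) = S N := (tightens_r N).antisymm (hstep ▸ tightens_s N)
  have hs_fix : s.polarize (S N) = S N := by rwa [S_succ, hr_fix] at hstep
  exact ⟨S N, Tightens.of_succ tightens_S N.zero_le, hr_fix, hs_fix,
    eventually_atTop.2 ⟨N, hN⟩⟩

end HalfSpaceReflection

end Moment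

/-! ### Decreasing rearrangements and truncation -/

section NthLargest

variable {α β : Type*}

theorem nthLargest_comp_equiv (τ : α ≃ β) (u : β → NNReal) (n : ℕ) :
    nthLargest (u ∘ τ) n = nthLargest u n := by
  refine congrArg sSup (Set.ext fun t => ⟨?_, ?_⟩)
  · rintro ⟨Ω, hcard, hΩ⟩
    exact ⟨Ω.map τ.toEmbedding, by rwa [Finset.card_map], Finset.forall_mem_map.2 hΩ⟩
  · rintro ⟨Ω, hcard, hΩ⟩
    exact ⟨Ω.map τ.symm.toEmbedding, by rwa [Finset.card_map],
      Finset.forall_mem_map.2 fun y hy => by simpa using hΩ y hy⟩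

variable {u : α → NNReal}

theorem nthLargest_le {n : ℕ} (hn : 1 ≤ n) {b : NNReal} (hu : ∀ x, u x ≤ b) :
    nthLargest u n ≤ b := by
  refine csSup_le' ?_
  rintro t ⟨Ω, rfl, hΩ⟩
  obtain ⟨x, hx⟩ := Finset.card_pos.1 hn
  exact (hΩ x hx).trans (hu x)

theorem lt_nthLargest_iff {n : ℕ} (hn : 1 ≤ n) (hu : BddAbove (Set.range u)) {t : NNReal} :
    t < nthLargest u n ↔ ∃ Ω : Finset α, Ω.card = n ∧ ∀ x ∈ Ω, t < u x := by
  obtain ⟨b, hb⟩ := hu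
  have bdd : BddAbove {t | ∃ Ω : Finset α, Ω.card = n ∧ ∀ x ∈ Ω, t ≤ u x} := by
    refine ⟨b, ?_⟩
    rintro t ⟨Ω, rfl, hΩ⟩
    obtain ⟨x, hx⟩ := Finset.card_pos.1 hn
    exact (hΩ x hx).trans (hb ⟨x, rfl⟩)
  constructor
  · intro h
    obtain ⟨t', ⟨Ω, hcard, hΩ⟩, htt'⟩ := exists_lt_of_lt_csSup' h
    exact ⟨Ω, hcard, fun x hx => htt'.trans_le (hΩ x hx)⟩
  · rintro ⟨Ω, rfl, hΩ⟩
    have hne : Ω.Nonempty := Finset.card_pos.1 hn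
    exact ((Finset.lt_inf'_iff hne).2 hΩ).trans_le
      (le_csSup bdd ⟨Ω, rfl, fun x hx => Finset.inf'_le u hx⟩)

theorem exists_pos_eq_of_forall_exists_pred {pos : α → ℕ}
    (hpred : ∀ y, 1 < pos y → ∃ z, pos z + 1 = pos y ∧ u y ≤ u z) {n : ℕ} (hn : 1 ≤ n) (y : α)
    (hny : n ≤ pos y) : ∃ z, pos z = n ∧ u y ≤ u z := by
  induction hny using Nat.decreasingInduction with
  | self => exact ⟨y, rfl, le_rfl⟩
  | of_succ k _ ih =>
    obtain ⟨z, hz, hyz⟩ := ih (by omega)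
    obtain ⟨z', hz', hzz'⟩ := hpred z (by omega)
    exact ⟨z', by omega, hyz.trans hzz'⟩

theorem nthLargest_eq_apply {pos : α → ℕ} (hinj : Function.Injective pos) (hpos : ∀ x, 1 ≤ pos x)
    (hpred : ∀ y, 1 < pos y → ∃ z, pos z + 1 = pos y ∧ u y ≤ u z) (x : α) :
    nthLargest u (pos x) = u x := by
  classical
  refine IsGreatest.csSup_eq ⟨?_, ?_⟩
  · refine ⟨(Finset.Icc 1 (pos x)).preimage pos hinj.injOn, ?_, fun y hy => ?_⟩
    · rw [Finset.card_preimage, Finset.filter_true_of_mem, Nat.card_Icc, Nat.add_sub_cancel]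
      intro n hn
      obtain ⟨hn₁, hnx⟩ := Finset.mem_Icc.1 hn
      obtain ⟨z, hz, -⟩ := exists_pos_eq_of_forall_exists_pred hpred hn₁ x hnx
      exact ⟨z, hz⟩
    · obtain ⟨z, hz, hle⟩ := exists_pos_eq_of_forall_exists_pred hpred (hpos y) x
        (Finset.mem_Icc.1 (Finset.mem_preimage.1 hy)).2
      rwa [hinj hz] at hle
  · rintro t ⟨Ω, hcard, hΩ⟩
    obtain ⟨y, hy, hxy⟩ : ∃ y ∈ Ω, pos x ≤ pos y := by
      by_contra! hlt
      have := Finset.card_le_card_of_injOn pos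
        (fun y hy => Finset.mem_Ico.2 ⟨hpos y, hlt y hy⟩) hinj.injOn
      rw [Nat.card_Ico] at this
      have := hpos x
      omega
    obtain ⟨z, hz, hle⟩ := exists_pos_eq_of_forall_exists_pred hpred (hpos x) y hxy
    rw [hinj hz] at hle
    exact (hΩ y hy).trans hle

/-- The function that keeps the values above the threshold `t` and replaces the others by `0`.
Unlike `(a - t) ⊔ 0` it only takes the value `0` or the original value. -/
def truncate (t : NNReal) (u : α → NNReal) : α → NNReal :=
  fun x => if t < u x then u x else 0

theorem lt_truncate_iff {s t : NNReal} {x : α} : s < truncate t u x ↔ t < u x ∧ s < u x := by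
  by_cases h : t < u x <;> simp [truncate, h]

theorem truncate_le (t : NNReal) (u : α → NNReal) (x : α) : truncate t u x ≤ u x := by
  by_cases h : t < u x <;> simp [truncate, h]

theorem nthLargest_truncate {n : ℕ} (hn : 1 ≤ n) (hu : BddAbove (Set.range u)) (t : NNReal) :
    nthLargest (truncate t u) n = truncate t (nthLargest u) n := by
  have bdd : BddAbove (Set.range (truncate t u)) := hu.range_mono _ (truncate_le t u)
  refine eq_of_forall_lt_iff fun s => ?_
  rw [lt_truncate_iff, ← max_lt_iff, lt_nthLargest_iff hn bdd, lt_nthLargest_iff hn hu]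
  simp only [lt_truncate_iff, max_lt_iff]

end NthLargest

section OneStep

variable {d : ℕ} {e : Fin d → ℝ}

theorem sameLine_refl (e : Fin d → ℝ) (x : ZLat d) : sameLine e x x :=
  ⟨0, by simp [funext_iff]⟩

theorem sameLine.symm {x y : ZLat d} (h : sameLine e x y) : sameLine e y x := by
  obtain ⟨c, hc⟩ := h
  exact ⟨-c, by rw [neg_smul, ← hc]; funext i; simp⟩

theorem sameLine.trans {x y z : ZLat d} (hxy : sameLine e x y) (hyz : sameLine e y z) :
    sameLine e x z := by
  obtain ⟨c, hc⟩ := hxy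
  obtain ⟨c', hc'⟩ := hyz
  exact ⟨c + c', by rw [add_smul, ← hc, ← hc']; funext i; simp⟩

theorem one_le_posIdx (m : ℤ) : 1 ≤ posIdx m := by
  unfold posIdx
  split_ifs <;> omega

theorem stepR_comp_perm {τ : Equiv.Perm (ZLat d)} (hτ : ∀ x, sameLine e x (τ x))
    (u : ZLat d → NNReal) : stepR e (u ∘ τ) = stepR e u := by
  funext x
  have hline (y : ZLat d) : sameLine e x (τ y) ↔ sameLine e x y :=
    ⟨fun h => h.trans (hτ y).symm, fun h => h.trans (hτ y)⟩
  exact nthLargest_comp_equiv (τ.subtypePerm hline) (fun y => u y) _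

theorem bddAbove_stepR {u : ZLat d → NNReal} (hu : BddAbove (Set.range u)) :
    BddAbove (Set.range (stepR e u)) := by
  obtain ⟨b, hb⟩ := hu
  refine ⟨b, ?_⟩
  rintro _ ⟨x, rfl⟩
  exact nthLargest_le (one_le_posIdx _) fun y => hb ⟨y, rfl⟩

theorem stepR_truncate {u : ZLat d → NNReal} (hu : BddAbove (Set.range u)) (t : NNReal) :
    stepR e (truncate t u) = truncate t (stepR e u) :=
  funext fun _ => nthLargest_truncate (one_le_posIdx _)
    (hu.mono (Set.range_comp_subset_range Subtype.val u)) t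

end OneStep

/-! ### Reflections of the lattice -/

section Lattice

variable {d : ℕ} {e : Fin d → ℝ} {a : ZLat d}

/-- `e` is one of the directions of `Evec d`, and the lattice points on a line of direction `e`
are exactly the translates of one of them by the multiples of `a`. -/
inductive IsLineGenerator : (Fin d → ℝ) → ZLat d → Prop
  | std (i : Fin d) : IsLineGenerator (stdVec d i) (Pi.single i 1)
  | pair {i j : Fin d} (hij : i < j) {s : ℤ} (hs : s = 1 ∨ s = -1) :
    IsLineGenerator (fun k => ((Pi.single i 1 + Pi.single j s : ZLat d) k : ℝ) / 2)
      (Pi.single i 1 + Pi.single j s)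

theorem exists_isLineGenerator (he : e ∈ EvecList d) : ∃ a, IsLineGenerator e a := by
  simp only [EvecList, List.mem_append, List.mem_map, List.mem_finRange, true_and,
    List.mem_flatMap, List.mem_filterMap, Option.ite_none_right_eq_some, Option.some.injEq] at he
  rcases he with (⟨i, rfl⟩ | ⟨i, j, hij, rfl⟩) | ⟨i, j, hij, rfl⟩
  · exact ⟨_, .std i⟩
  · convert Exists.intro _ (IsLineGenerator.pair hij (Or.inl rfl)) using 4 with k
    simp [stdVec, Pi.single_apply]
  · convert Exists.intro _ (IsLineGenerator.pair hij (Or.inr rfl)) using 4 with k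
    simp [stdVec, Pi.single_apply]
    split_ifs <;> norm_num

theorem sum_single_add_single_mul (i j : Fin d) (s : ℤ) (f : Fin d → ℝ) :
    ∑ k, ((Pi.single i 1 + Pi.single j s : ZLat d) k : ℝ) * f k = f i + s * f j := by
  simp [Pi.single_apply, add_mul, Finset.sum_add_distrib]

theorem two_mul_sum_stdVec_mul (i : Fin d) (x : ZLat d) :
    2 * ∑ k, stdVec d i k * (x k : ℝ) = (2 * x i : ℤ) := by
  simp [stdVec]

theorem two_mul_sum_single_add_single_mul (i j : Fin d) (s : ℤ) (x : ZLat d) :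
    2 * ∑ k, ((Pi.single i 1 + Pi.single j s : ZLat d) k : ℝ) / 2 * (x k : ℝ) =
      (x i + s * x j : ℤ) := by
  simp only [div_mul_eq_mul_div, ← Finset.sum_div, sum_single_add_single_mul]
  push_cast
  ring

theorem pairing_stdVec (i : Fin d) (x : ZLat d) : pairing (stdVec d i) x = 2 * x i := by
  rw [pairing, two_mul_sum_stdVec_mul, Int.floor_intCast]

theorem pairing_single_add_single (i j : Fin d) (s : ℤ) (x : ZLat d) :
    pairing (fun k => ((Pi.single i 1 + Pi.single j s : ZLat d) k : ℝ) / 2) x = x i + s * x j := by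
  rw [pairing, two_mul_sum_single_add_single_mul, Int.floor_intCast]

namespace IsLineGenerator

theorem exists_apply_eq_one (h : IsLineGenerator e a) : ∃ i, a i = 1 := by
  cases h with
  | std i => exact ⟨i, by simp⟩
  | @pair i j hij => exact ⟨i, by simp [hij.ne]⟩

theorem cast_apply (h : IsLineGenerator e a) (k : Fin d) :
    (a k : ℝ) = (∑ l, (a l : ℝ) ^ 2) * e k := by
  cases h with
  | std i => simp [stdVec, Pi.single_apply]
  | @pair i j hij s hs =>
    have hsq : (s : ℝ) ^ 2 = 1 := by rcases hs with rfl | rfl <;> norm_num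
    have hnorm : ∑ l, ((Pi.single i 1 + Pi.single j s : ZLat d) l : ℝ) ^ 2 = 2 := by
      simp only [sq ((_ : ℤ) : ℝ), sum_single_add_single_mul]
      simp [hij.ne, hij.ne', ← sq, hsq, one_add_one_eq_two]
    rw [hnorm, mul_div_cancel₀ _ two_ne_zero]

theorem cast_pairing (h : IsLineGenerator e a) (x : ZLat d) :
    (pairing e x : ℝ) = 2 * ∑ k, e k * x k := by
  cases h with
  | std i => rw [pairing_stdVec, two_mul_sum_stdVec_mul]
  | pair => rw [pairing_single_add_single, two_mul_sum_single_add_single_mul]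

theorem sum_sq_pos (h : IsLineGenerator e a) : 0 < ∑ l, (a l : ℝ) ^ 2 := by
  obtain ⟨i, hi⟩ := h.exists_apply_eq_one
  exact Finset.sum_pos' (fun l _ => sq_nonneg _) ⟨i, Finset.mem_univ i, by simp [hi]⟩

theorem sum_mul_cast (h : IsLineGenerator e a) : ∑ k, e k * (a k : ℝ) = 1 := by
  refine mul_left_cancel₀ h.sum_sq_pos.ne' ?_
  rw [mul_one, Finset.mul_sum]
  exact Finset.sum_congr rfl fun k _ => by rw [← mul_assoc, ← h.cast_apply, sq]

theorem pairing_add_zsmul (h : IsLineGenerator e a) (x : ZLat d) (t : ℤ) :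
    pairing e (x + t • a) = pairing e x + 2 * t := by
  have key : (pairing e (x + t • a) : ℝ) = pairing e x + 2 * t := by
    rw [h.cast_pairing, h.cast_pairing]
    calc 2 * ∑ k, e k * ((x + t • a) k : ℝ)
        = 2 * ∑ k, e k * (x k : ℝ) + 2 * t * ∑ k, e k * (a k : ℝ) := by
          simp only [Pi.add_apply, Pi.smul_apply, smul_eq_mul, Int.cast_add, Int.cast_mul, mul_add,
            Finset.sum_add_distrib, Finset.mul_sum]
          congr 1
          exact Finset.sum_congr rfl fun k _ => by ring
      _ = _ := by rw [h.sum_mul_cast, mul_one]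
  exact_mod_cast key

theorem sameLine_iff (h : IsLineGenerator e a) {x y : ZLat d} :
    sameLine e x y ↔ ∃ t : ℤ, y = x + t • a := by
  constructor
  · rintro ⟨c, hc⟩
    obtain ⟨i, hi⟩ := h.exists_apply_eq_one
    have hxy (k : Fin d) : (x k : ℝ) - y k = c * e k := congrFun hc k
    have hei : (∑ l, (a l : ℝ) ^ 2) * e i = 1 := by rw [← h.cast_apply, hi, Int.cast_one]
    refine ⟨y i - x i, funext fun k => ?_⟩
    have key : (y k : ℝ) = x k + (y i - x i) * a k := by
      rw [h.cast_apply]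
      linear_combination -hxy k + (∑ l, (a l : ℝ) ^ 2) * e k * hxy i + c * e k * hei
    exact_mod_cast key
  · rintro ⟨t, rfl⟩
    refine ⟨-t * ∑ l, (a l : ℝ) ^ 2, funext fun k => ?_⟩
    have key := h.cast_apply k
    simp only [Pi.add_apply, Pi.smul_apply, smul_eq_mul, Int.cast_add, Int.cast_mul]
    linear_combination -t * key

end IsLineGenerator

/-- The reflection that sends the coordinate `pairing e x` to `2 * c - pairing e x` and preserves
all lines of direction `e`; here `a` generates the lattice points on these lines. -/
def reflect (e : Fin d → ℝ) (a : ZLat d) (c : ℤ) (x : ZLat d) : ZLat d :=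
  x + (c - pairing e x) • a

theorem reflect_of_pairing_eq {c : ℤ} {x : ZLat d} (h : pairing e x = c) :
    reflect e a c x = x := by
  rw [reflect, h, sub_self, zero_smul, add_zero]

namespace IsLineGenerator

theorem pairing_reflect (h : IsLineGenerator e a) (c : ℤ) (x : ZLat d) :
    pairing e (reflect e a c x) = 2 * c - pairing e x := by
  rw [reflect, h.pairing_add_zsmul]
  ring

theorem reflect_involutive (h : IsLineGenerator e a) (c : ℤ) :
    Function.Involutive (reflect e a c) := fun x => by
  rw [reflect, h.pairing_reflect, reflect, add_assoc, ← add_smul]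
  simp [sub_sub_eq_add_sub, two_mul]

theorem sameLine_reflect (h : IsLineGenerator e a) (c : ℤ) (x : ZLat d) :
    sameLine e x (reflect e a c x) :=
  h.sameLine_iff.2 ⟨_, rfl⟩

end IsLineGenerator

theorem reflect_stdVec_apply (i : Fin d) (c : ℤ) (x : ZLat d) :
    reflect (stdVec d i) (Pi.single i 1) c x i = c - x i := by
  rw [reflect, pairing_stdVec, Pi.add_apply, Pi.smul_apply, Pi.single_eq_same, smul_eq_mul]
  ring

theorem reflect_single_add_single_apply_left {i j : Fin d} (hij : i ≠ j) (s c : ℤ)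
    (x : ZLat d) :
    reflect (fun k => ((Pi.single i 1 + Pi.single j s : ZLat d) k : ℝ) / 2)
      (Pi.single i 1 + Pi.single j s) c x i = c - s * x j := by
  rw [reflect, pairing_single_add_single, Pi.add_apply, Pi.smul_apply, Pi.add_apply,
    Pi.single_eq_same, Pi.single_eq_of_ne hij, smul_eq_mul]
  ring

theorem reflect_single_add_single_apply_right {i j : Fin d} (hij : i ≠ j) (s c : ℤ)
    (x : ZLat d) :
    reflect (fun k => ((Pi.single i 1 + Pi.single j s : ZLat d) k : ℝ) / 2)
      (Pi.single i 1 + Pi.single j s) c x j = x j + s * (c - (x i + s * x j)) := by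
  rw [reflect, pairing_single_add_single, Pi.add_apply, Pi.smul_apply, Pi.add_apply,
    Pi.single_eq_same, Pi.single_eq_of_ne hij.symm, smul_eq_mul]
  ring

theorem latDist_le_latDist_of_sum_le {x y x' y' : ZLat d} (s : Finset (Fin d))
    (hoff : ∀ k ∉ s, x k - y k = x' k - y' k)
    (hon : ∑ k ∈ s, (x k - y k).natAbs ≤ ∑ k ∈ s, (x' k - y' k).natAbs) :
    latDist x y ≤ latDist x' y' := by
  rw [latDist, latDist, ← Finset.sum_add_sum_compl s, ← Finset.sum_add_sum_compl s]
  refine add_le_add hon (Finset.sum_le_sum fun k hk => ?_)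
  rw [hoff k (Finset.mem_compl.1 hk)]

namespace IsLineGenerator

theorem latDist_reflect_reflect_le (h : IsLineGenerator e a) (c : ℤ) (x y : ZLat d) :
    latDist (reflect e a c x) (reflect e a c y) ≤ latDist x y := by
  cases h with
  | std i =>
    refine latDist_le_latDist_of_sum_le {i} (fun k hk => ?_) ?_
    · simp_all [reflect]
    · simp only [Finset.sum_singleton, reflect_stdVec_apply]
      omega
  | @pair i j hij s hs =>
    refine latDist_le_latDist_of_sum_le {i, j} (fun k hk => ?_) ?_
    · simp_all [reflect]
    · simp only [Finset.sum_pair hij.ne, reflect_single_add_single_apply_left hij.ne,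
        reflect_single_add_single_apply_right hij.ne]
      rcases hs with rfl | rfl <;> omega

theorem latDist_reflect_reflect (h : IsLineGenerator e a) (c : ℤ) (x y : ZLat d) :
    latDist (reflect e a c x) (reflect e a c y) = latDist x y := by
  refine (h.latDist_reflect_reflect_le c x y).antisymm ?_
  simpa only [h.reflect_involutive c _] using
    h.latDist_reflect_reflect_le c (reflect e a c x) (reflect e a c y)

theorem latDist_le_latDist_reflect (h : IsLineGenerator e a) {c : ℤ} {x y : ZLat d}
    (hxy : c ≤ pairing e x ∧ c ≤ pairing e y ∨ pairing e x ≤ c ∧ pairing e y ≤ c) :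
    latDist x y ≤ latDist x (reflect e a c y) := by
  cases h with
  | std i =>
    rw [pairing_stdVec, pairing_stdVec] at hxy
    refine latDist_le_latDist_of_sum_le {i} (fun k hk => ?_) ?_
    · simp_all [reflect]
    · simp only [Finset.sum_singleton, reflect_stdVec_apply]
      omega
  | @pair i j hij s hs =>
    rw [pairing_single_add_single, pairing_single_add_single] at hxy
    refine latDist_le_latDist_of_sum_le {i, j} (fun k hk => ?_) ?_
    · simp_all [reflect]
    · simp only [Finset.sum_pair hij.ne, reflect_single_add_single_apply_left hij.ne,
        reflect_single_add_single_apply_right hij.ne]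
      rcases hs with rfl | rfl <;> omega

end IsLineGenerator

end Lattice

/-! ### One-step rearrangements as limits of two-point rearrangements -/

section Weight

variable {d : ℕ} {e : Fin d → ℝ} {a : ZLat d}

/-- A point with `0 < 2 ⟨e, z⟩ < 1` for all directions `e` in `Evec d`, so that it lies strictly
between the hyperplanes of the reflections `reflect e a 0` and `reflect e a 1`. -/
def centre (d : ℕ) (k : Fin d) : ℝ := (d - k) / (2 * (d + 1))

theorem centre_strictAnti (d : ℕ) : StrictAnti (centre d) := fun i j hij => by
  have : ((i : ℕ) : ℝ) < (j : ℕ) := by exact_mod_cast hij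
  unfold centre
  gcongr

theorem centre_pos (i : Fin d) : 0 < centre d i := by
  have : ((i : ℕ) : ℝ) < d := by exact_mod_cast i.isLt
  exact div_pos (sub_pos.2 this) (by positivity)

theorem centre_lt (i : Fin d) : centre d i < 1 / 2 := by
  have : (0 : ℝ) ≤ (i : ℕ) := Nat.cast_nonneg _
  rw [centre, div_lt_div_iff₀ (by positivity) two_pos]
  linarith

theorem IsLineGenerator.two_mul_sum_mul_centre_mem_Ioo (h : IsLineGenerator e a) :
    2 * ∑ k, e k * centre d k ∈ Set.Ioo (0 : ℝ) 1 := by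
  cases h with
  | std i =>
    have hsum : 2 * ∑ k, stdVec d i k * centre d k = 2 * centre d i := by simp [stdVec]
    rw [hsum]
    constructor <;> linarith [centre_pos i, centre_lt i]
  | @pair i j hij s hs =>
    simp only [div_mul_eq_mul_div, ← Finset.sum_div, sum_single_add_single_mul,
      mul_div_cancel₀ _ (two_ne_zero (α := ℝ))]
    have := centre_pos j
    have := centre_lt i
    have := centre_strictAnti d hij
    rcases hs with rfl | rfl <;> constructor <;> push_cast <;> linarith

/-- The squared distance to `centre d`. -/
def centreWeight (d : ℕ) (x : ZLat d) : NNReal :=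
  ⟨∑ k, ((x k : ℝ) - centre d k) ^ 2, Finset.sum_nonneg fun _ _ => sq_nonneg _⟩

theorem coe_centreWeight (x : ZLat d) :
    (centreWeight d x : ℝ) = ∑ k, ((x k : ℝ) - centre d k) ^ 2 :=
  rfl

theorem finite_centreWeight_le (d : ℕ) (M : NNReal) : {x | centreWeight d x ≤ M}.Finite := by
  refine (Set.finite_Icc (fun _ => -(⌈M⌉₊ + 2 : ℤ)) fun _ => (⌈M⌉₊ + 2 : ℤ)).subset fun x hx => ?_
  have abs_apply_le (k : Fin d) : |x k| ≤ (⌈M⌉₊ + 2 : ℤ) := by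
    have hsq : ((x k : ℝ) - centre d k) ^ 2 ≤ M :=
      (Finset.single_le_sum (fun l _ => sq_nonneg ((x l : ℝ) - centre d l))
        (Finset.mem_univ k)).trans hx
    have hM : (M : ℝ) ≤ ⌈M⌉₊ := by exact_mod_cast Nat.le_ceil M
    have hx : |(x k : ℝ)| ≤ ⌈M⌉₊ + 2 :=
      abs_le.2 ⟨by nlinarith [centre_pos k, centre_lt k], by nlinarith [centre_pos k, centre_lt k]⟩
    exact_mod_cast hx
  exact ⟨fun k => (abs_le.1 (abs_apply_le k)).1, fun k => (abs_le.1 (abs_apply_le k)).2⟩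

theorem IsLineGenerator.centreWeight_reflect (h : IsLineGenerator e a) (c : ℤ) (x : ZLat d) :
    (centreWeight d (reflect e a c x) : ℝ) = centreWeight d x +
      (∑ k, (a k : ℝ) ^ 2) * (c - pairing e x) * (c - 2 * ∑ k, e k * centre d k) := by
  have sum_mul (f : Fin d → ℝ) :
      ∑ k, (a k : ℝ) * f k = (∑ k, (a k : ℝ) ^ 2) * ∑ k, e k * f k := by
    rw [Finset.mul_sum]
    exact Finset.sum_congr rfl fun k _ => by rw [h.cast_apply, mul_assoc]
  have expand (t : ℝ) : ∑ k, ((x k : ℝ) + t * a k - centre d k) ^ 2 =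
      ∑ k, ((x k : ℝ) - centre d k) ^ 2 + t ^ 2 * ∑ k, (a k : ℝ) ^ 2 +
        2 * t * (∑ k, (a k : ℝ) * x k - ∑ k, (a k : ℝ) * centre d k) := by
    simp only [Finset.mul_sum, ← Finset.sum_add_distrib, ← Finset.sum_sub_distrib]
    exact Finset.sum_congr rfl fun k _ => by ring
  have hcoord (k : Fin d) : (reflect e a c x k : ℝ) = x k + (c - pairing e x) * a k := by
    simp [reflect]
  rw [coe_centreWeight, coe_centreWeight]
  simp only [hcoord]
  rw [expand, sum_mul, sum_mul]
  linear_combination (-(c - pairing e x) * ∑ k, (a k : ℝ) ^ 2) * h.cast_pairing x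

end Weight

namespace IsLineGenerator

variable {d : ℕ} {e : Fin d → ℝ} {a : ZLat d}

/-- The reflection `reflect e a c`; the sign `s` selects the half space. -/
def halfSpaceReflection (h : IsLineGenerator e a) (c : ℤ) (s : ℤˣ) :
    HalfSpaceReflection (ZLat d) where
  toFun := reflect e a c
  half := {x | 0 ≤ s * (pairing e x - c)}
  involutive := h.reflect_involutive c
  mem_or_apply_mem x := by
    simp only [Set.mem_ofPred_eq, h.pairing_reflect]
    rcases Int.units_eq_one_or s with rfl | rfl <;> push_cast <;> omega
  apply_eq_of_mem x hx hrx := by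
    simp only [Set.mem_ofPred_eq, h.pairing_reflect] at hx hrx
    refine reflect_of_pairing_eq ?_
    rcases Int.units_eq_one_or s with rfl | rfl <;> push_cast at hx hrx <;> omega

theorem favors_antitone_latDist (h : IsLineGenerator e a) (c : ℤ) (s : ℤˣ)
    {H : ℕ → NNReal} (hH : Antitone H) :
    (h.halfSpaceReflection c s).Favors fun x y => H (latDist x y) where
  apply_apply x y := congrArg H (h.latDist_reflect_reflect c x y)
  apply_right_le x hx y hy := by
    refine hH (h.latDist_le_latDist_reflect ?_)
    simp only [halfSpaceReflection, Set.mem_ofPred_eq] at hx hy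
    rcases Int.units_eq_one_or s with rfl | rfl <;> push_cast at hx hy <;> omega

theorem raisesWeight (h : IsLineGenerator e a) {c : ℤ} {s : ℤˣ}
    (hc : 0 < (s : ℝ) * (2 * ∑ k, e k * centre d k - c)) :
    (h.halfSpaceReflection c s).RaisesWeight (centreWeight d) := by
  intro x hx hmove
  have hpos : 0 < (s : ℝ) * (pairing e x - c) := by
    have hx : (0 : ℝ) ≤ s * (pairing e x - c) := by
      exact_mod_cast (hx : 0 ≤ (s : ℤ) * (pairing e x - c))
    refine hx.lt_of_ne' fun hzero => hmove (reflect_of_pairing_eq ?_)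
    have hzero : (s : ℤ) * (pairing e x - c) = 0 := by exact_mod_cast hzero
    exact sub_eq_zero.1 ((mul_eq_zero.1 hzero).resolve_left s.ne_zero)
  have hs : (s : ℝ) * s = 1 := by rcases Int.units_eq_one_or s with rfl | rfl <;> simp
  rw [← NNReal.coe_lt_coe]
  refine (lt_add_of_pos_right _ ?_).trans_eq (h.centreWeight_reflect c x).symm
  calc 0 < (∑ k, (a k : ℝ) ^ 2) * ((s * (pairing e x - c)) *
        (s * (2 * ∑ k, e k * centre d k - c))) := mul_pos h.sum_sq_pos (mul_pos hpos hc)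
    _ = (∑ k, (a k : ℝ) ^ 2) * (s * s) * (c - pairing e x) *
        (c - 2 * ∑ k, e k * centre d k) := by ring
    _ = _ := by rw [hs, mul_one]

theorem stepR_eq_self (h : IsLineGenerator e a) {v : ZLat d → NNReal}
    (h₀ : ∀ x, 0 ≤ pairing e x → v (reflect e a 0 x) ≤ v x)
    (h₁ : ∀ x, pairing e x ≤ 1 → v (reflect e a 1 x) ≤ v x) : stepR e v = v := by
  funext x
  refine nthLargest_eq_apply (pos := fun y : {y // sameLine e x y} => posIdx (pairing e y.1))
    ?_ (fun _ => one_le_posIdx _) ?_ ⟨x, sameLine_refl e x⟩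
  · rintro ⟨y, hy⟩ ⟨z, hz⟩ hyz
    obtain ⟨t, rfl⟩ := h.sameLine_iff.1 hy
    obtain ⟨t', rfl⟩ := h.sameLine_iff.1 hz
    simp only [h.pairing_add_zsmul, posIdx] at hyz
    have htt' : t = t' := by split_ifs at hyz <;> omega
    simp only [htt']
  · rintro ⟨y, hy⟩ hpos
    have pred {c : ℤ} (hpred : posIdx (2 * c - pairing e y) + 1 = posIdx (pairing e y))
        (hle : v (reflect e a c (reflect e a c y)) ≤ v (reflect e a c y)) :
        ∃ z : {z // sameLine e x z}, posIdx (pairing e z.1) + 1 = posIdx (pairing e y) ∧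
          v y ≤ v z :=
      ⟨⟨reflect e a c y, hy.trans (h.sameLine_reflect c y)⟩, by rwa [h.pairing_reflect],
        by rwa [h.reflect_involutive c y] at hle⟩
    simp only [posIdx] at hpos
    by_cases hp : 0 < pairing e y
    · refine pred (c := 1) ?_ (h₁ _ ?_)
      · unfold posIdx
        split_ifs <;> omega
      · rw [h.pairing_reflect]
        omega
    · refine pred (c := 0) ?_ (h₀ _ ?_)
      · unfold posIdx
        split_ifs <;> omega
      · rw [h.pairing_reflect]
        omega

theorem stepR_polarize (h : IsLineGenerator e a) (c : ℤ) (s : ℤˣ) (u : ZLat d → NNReal) :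
    stepR e ((h.halfSpaceReflection c s).polarize u) = stepR e u := by
  obtain ⟨τ, hτ, hu⟩ := (h.halfSpaceReflection c s).exists_perm_polarize_eq_comp u
  rw [hu, stepR_comp_perm fun x => ?_]
  rcases hτ x with hx | hx <;> rw [hx]
  · exact sameLine_refl e x
  · exact h.sameLine_reflect c x

/-- The reflection that maps the line coordinate `p` to `-p` and prefers `0 ≤ p`. -/
def negReflection (h : IsLineGenerator e a) : HalfSpaceReflection (ZLat d) :=
  h.halfSpaceReflection 0 1

/-- The reflection that maps the line coordinate `p` to `2 - p` and prefers `p ≤ 1`. -/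
def twoSubReflection (h : IsLineGenerator e a) : HalfSpaceReflection (ZLat d) :=
  h.halfSpaceReflection 1 (-1)

theorem tightens_stepR_and_iterate_polarize_eq (h : IsLineGenerator e a) {u : ZLat d → NNReal}
    (hu : u.support.Finite) :
    Tightens (centreWeight d) u (stepR e u) ∧
      ∀ᶠ n in atTop,
        (h.twoSubReflection.polarize ∘ h.negReflection.polarize)^[n] u = stepR e u := by
  obtain ⟨hpos, hlt⟩ := h.two_mul_sum_mul_centre_mem_Ioo
  have hneg : h.negReflection.RaisesWeight (centreWeight d) :=
    h.raisesWeight (by simpa using hpos)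
  have htwo : h.twoSubReflection.RaisesWeight (centreWeight d) :=
    h.raisesWeight (by simpa using hlt)
  obtain ⟨v, hv, hneg_fix, htwo_fix, heventually⟩ :=
    HalfSpaceReflection.exists_iterate_polarize_eq (finite_centreWeight_le d) hneg htwo hu
  have stepR_iterate (n : ℕ) :
      stepR e ((h.twoSubReflection.polarize ∘ h.negReflection.polarize)^[n] u) = stepR e u := by
    induction n with
    | zero => rfl
    | succ n ih =>
      rw [Function.iterate_succ_apply', Function.comp_apply, twoSubReflection, stepR_polarize,
        negReflection, stepR_polarize]
      exact ih
  have hstep : stepR e v = v := h.stepR_eq_self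
    (fun x hx => h.negReflection.apply_le_of_polarize_eq hneg_fix
      (by simpa [negReflection, halfSpaceReflection] using hx))
    (fun x hx => h.twoSubReflection.apply_le_of_polarize_eq htwo_fix
      (by simpa [twoSubReflection, halfSpaceReflection] using hx))
  obtain ⟨n, hn⟩ := heventually.exists
  have hvu : v = stepR e u := by rw [← hstep, ← hn, stepR_iterate]
  exact hvu ▸ ⟨hv, heventually⟩

theorem tightens_stepR (h : IsLineGenerator e a) {u : ZLat d → NNReal} (hu : u.support.Finite) :
    Tightens (centreWeight d) u (stepR e u) :=
  (h.tightens_stepR_and_iterate_polarize_eq hu).1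

theorem energy_le_energy_stepR {ι : Type*} [Fintype ι] (h : IsLineGenerator e a)
    {G : (ι → NNReal) → NNReal} (hG : LatticeSupermodular G) {H : ι → ι → ℕ → NNReal}
    (hH : ∀ i j, Antitone (H i j)) {u : ι → ZLat d → NNReal} (hu : ∀ i, (u i).support.Finite) :
    energy (fun i j x y => H i j (latDist x y)) G u ≤
      energy (fun i j x y => H i j (latDist x y)) G fun i => stepR e (u i) := by
  have le_polarize (c : ℤ) (s : ℤˣ) (v : ι → ZLat d → NNReal) :=
    HalfSpaceReflection.energy_le_energy_polarize hG
      (fun i j => h.favors_antitone_latDist c s (hH i j)) v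
  have le_iterate (n : ℕ) : energy (fun i j x y => H i j (latDist x y)) G u ≤
      energy (fun i j x y => H i j (latDist x y)) G fun i =>
        (h.twoSubReflection.polarize ∘ h.negReflection.polarize)^[n] (u i) := by
    induction n with
    | zero => exact le_rfl
    | succ n ih =>
      simp only [Function.iterate_succ_apply']
      exact (ih.trans (le_polarize 0 1 _)).trans (le_polarize 1 (-1) _)
  obtain ⟨n, hn⟩ :=
    (eventually_all.2 fun i => (h.tightens_stepR_and_iterate_polarize_eq (hu i)).2).exists
  simpa only [hn] using le_iterate n

end IsLineGenerator

/-! ### The Schwarz rearrangement on `ℤ^d` -/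

section Iterate

variable {d : ℕ} {u : ZLat d → NNReal}

theorem exists_isLineGenerator_getD_evecList (hd : 0 < d) (k : ℕ) :
    ∃ a, IsLineGenerator ((EvecList d).getD (k % (EvecList d).length) 0) a := by
  have length_pos : 0 < (EvecList d).length := by
    simp only [EvecList, List.length_append, List.length_map, List.length_finRange]
    omega
  refine exists_isLineGenerator ?_
  rw [List.getD_eq_getElem _ _ (Nat.mod_lt k length_pos)]
  exact List.getElem_mem _

theorem support_iterR_finite (hd : 0 < d) (hu : u.support.Finite) (k : ℕ) :
    (iterR d u k).support.Finite := by
  induction k with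
  | zero => exact hu
  | succ k ih =>
    obtain ⟨a, h⟩ := exists_isLineGenerator_getD_evecList hd k
    exact (h.tightens_stepR ih).support_finite (finite_centreWeight_le d) ih

theorem tightens_iterR_succ (hd : 0 < d) (hu : u.support.Finite) (k : ℕ) :
    Tightens (centreWeight d) (iterR d u k) (iterR d u (k + 1)) := by
  obtain ⟨a, h⟩ := exists_isLineGenerator_getD_evecList hd k
  exact h.tightens_stepR (support_iterR_finite hd hu k)

theorem eventually_iterR_eq_RZd (hd : 0 < d) (hu : u.support.Finite) :
    ∀ᶠ k in atTop, iterR d u k = RZd d u := by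
  obtain ⟨N, hN⟩ := Tightens.exists_forall_ge_eq (finite_centreWeight_le d)
    (tightens_iterR_succ hd hu) hu
  have hlim : RZd d u = iterR d u N := funext fun x =>
    (tendsto_atTop_of_eventually_const fun n hn => congrFun (hN n hn) x).limUnder_eq
  exact eventually_atTop.2 ⟨N, hlim ▸ hN⟩

theorem bddAbove_iterR (hu : BddAbove (Set.range u)) (k : ℕ) :
    BddAbove (Set.range (iterR d u k)) := by
  induction k with
  | zero => exact hu
  | succ k ih => exact bddAbove_stepR ih

theorem iterR_truncate (hu : BddAbove (Set.range u)) (t : NNReal) (k : ℕ) :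
    iterR d (truncate t u) k = truncate t (iterR d u k) := by
  induction k with
  | zero => rfl
  | succ k ih => rw [iterR, ih, stepR_truncate (bddAbove_iterR hu k), iterR]

end Iterate

section Admissible

variable {α : Type*} {u : α → NNReal}

theorem Admissible.bddAbove (hu : Admissible u) : BddAbove (Set.range u) := by
  obtain ⟨b, hb⟩ := ((hu 1 one_pos).image u).bddAbove
  refine ⟨max b 1, ?_⟩
  rintro _ ⟨x, rfl⟩
  rcases lt_or_ge 1 (u x) with hx | hx
  · exact (hb ⟨x, hx, rfl⟩).trans (le_max_left _ _)
  · exact hx.trans (le_max_right _ _)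

theorem Admissible.support_truncate_finite (hu : Admissible u) {t : NNReal} (ht : 0 < t) :
    (truncate t u).support.Finite :=
  (hu t ht).subset fun _ hx => (lt_truncate_iff.1 (pos_iff_ne_zero.2 hx)).1

theorem eventually_truncate_eq (u : α → NNReal) (x : α) :
    ∀ᶠ t in 𝓝[>] 0, truncate t u x = u x := by
  rcases eq_zero_or_pos (u x) with hx | hx
  · exact .of_forall fun t => by simp [truncate, hx]
  · filter_upwards [Ioo_mem_nhdsGT hx] with t ht
    exact if_pos ht.2

theorem RZd_truncate_eq_zero_or {d : ℕ} (hd : 0 < d) {u : ZLat d → NNReal} (hu : Admissible u)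
    {t : NNReal} (ht : 0 < t) (x : ZLat d) :
    RZd d (truncate t u) x = 0 ∨ RZd d (truncate t u) x = RZd d u x := by
  refine or_iff_not_imp_left.2 fun hne => ?_
  have heventually : ∀ᶠ k in atTop, iterR d u k x = RZd d (truncate t u) x := by
    filter_upwards [eventually_iterR_eq_RZd hd (hu.support_truncate_finite ht)] with k hk
    rw [← hk, iterR_truncate hu.bddAbove] at hne ⊢
    exact ((ite_eq_or_eq _ _ _).resolve_right hne).symm
  exact (tendsto_const_nhds.congr' (EventuallyEq.symm heventually)).limUnder_eq.symm

end Admissible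

section Riesz

variable {ι : Type*} [Fintype ι] {G : (ι → NNReal) → NNReal}

theorem energy_le_of_forall_energy_truncate_le {X : Type*} {K : ι → ι → X → X → NNReal}
    {u : ι → X → NNReal} {c : ENNReal}
    (h : ∀ t, 0 < t → energy K G (fun i => truncate t (u i)) ≤ c) : energy K G u ≤ c := by
  rw [energy, ENNReal.tsum_eq_iSup_sum]
  refine iSup_le fun s => ?_
  have eventually_eq : ∀ᶠ t in 𝓝[>] 0, ∀ x ∈ s, ∀ i, truncate t (u i) (x i) = u i (x i) :=
    (eventually_all_finset s).2 fun x _ => eventually_all.2 fun i =>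
      eventually_truncate_eq (u i) (x i)
  obtain ⟨t, hts, ht⟩ := (eventually_eq.and self_mem_nhdsWithin).exists
  calc ∑ x ∈ s, (energyDensity K G u x : ENNReal)
      = ∑ x ∈ s, (energyDensity K G (fun i => truncate t (u i)) x : ENNReal) :=
        Finset.sum_congr rfl fun x hx => by simp only [energyDensity, hts x hx]
    _ ≤ energy K G fun i => truncate t (u i) := ENNReal.sum_le_tsum s
    _ ≤ c := h t ht

variable {d : ℕ} {H : ι → ι → ℕ → NNReal} {u : ι → ZLat d → NNReal}

theorem energy_le_energy_iterR (hd : 0 < d) (hG : LatticeSupermodular G)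
    (hH : ∀ i j, Antitone (H i j)) (hu : ∀ i, (u i).support.Finite) (k : ℕ) :
    energy (fun i j x y => H i j (latDist x y)) G u ≤
      energy (fun i j x y => H i j (latDist x y)) G fun i => iterR d (u i) k := by
  induction k with
  | zero => exact le_rfl
  | succ k ih =>
    obtain ⟨a, h⟩ := exists_isLineGenerator_getD_evecList hd k
    exact ih.trans (h.energy_le_energy_stepR hG hH fun i => support_iterR_finite hd (hu i) k)

theorem energy_le_energy_RZd_of_support_finite (hd : 0 < d) (hG : LatticeSupermodular G)
    (hH : ∀ i j, Antitone (H i j)) (hu : ∀ i, (u i).support.Finite) :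
    energy (fun i j x y => H i j (latDist x y)) G u ≤
      energy (fun i j x y => H i j (latDist x y)) G fun i => RZd d (u i) := by
  obtain ⟨k, hk⟩ := (eventually_all.2 fun i => eventually_iterR_eq_RZd hd (hu i)).exists
  simpa only [hk] using energy_le_energy_iterR hd hG hH hu k

end Riesz

theorem stmt13_general {d : ℕ} (hd : 0 < d) {ι : Type*} [Fintype ι] {u : ι → ZLat d → NNReal}
    (hu : ∀ i, Admissible (u i)) {G : (ι → NNReal) → NNReal} (hG : LatticeSupermodular G)
    (hG0 : G 0 = 0) {H : ι → ι → ℕ → NNReal} (hH : ∀ i j, Antitone (H i j)) :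
    energy (fun i j x y => H i j (latDist x y)) G u ≤
      energy (fun i j x y => H i j (latDist x y)) G fun i => RZd d (u i) := by
  refine energy_le_of_forall_energy_truncate_le fun t ht => ?_
  calc energy (fun i j x y => H i j (latDist x y)) G (fun i => truncate t (u i))
      ≤ energy (fun i j x y => H i j (latDist x y)) G fun i => RZd d (truncate t (u i)) :=
        energy_le_energy_RZd_of_support_finite hd hG hH fun i => (hu i).support_truncate_finite ht
    _ ≤ energy (fun i j x y => H i j (latDist x y)) G fun i => RZd d (u i) :=
        ENNReal.tsum_le_tsum fun x => ENNReal.coe_le_coe.2 <| mul_le_mul_left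
          (hG.le_of_forall_eq_zero_or_eq hG0 fun i => RZd_truncate_eq_zero_or hd (hu i) ht (x i)) _

/-- Discrete extended Riesz inequality. -/
theorem stmt13 (d m : ℕ) (hd : 2 ≤ d) (hm : 2 ≤ m)
    (u : Fin m → ZLat d → NNReal) (hu : ∀ i, Admissible (u i))
    (G : (Fin m → NNReal) → NNReal) (hG : SupermodularVec G) (hG0 : G 0 = 0)
    (H : Fin m → Fin m → NNReal → NNReal) (hH : ∀ i j : Fin m, i < j → Antitone (H i j)) :
    ∑' x : Fin m → ZLat d,
        ((G (fun i => u i (x i)) *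
          ∏ i : Fin m, ∏ j : Fin m,
            (if i < j then H i j (latDist (x i) (x j)) else 1) : NNReal) : ENNReal) ≤
    ∑' x : Fin m → ZLat d,
        ((G (fun i => RZd d (u i) (x i)) *
          ∏ i : Fin m, ∏ j : Fin m,
            (if i < j then H i j (latDist (x i) (x j)) else 1) : NNReal) : ENNReal) := by
  refine stmt13_general (H := fun i j n => if i < j then H i j n else 1) (by omega) hu
    hG.latticeSupermodular hG0 fun i j => ?_
  split_ifs with hij
  exacts [(hH i j hij).comp_monotone Nat.mono_cast, antitone_const]

end
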